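/- Let 1/2 < s < 1. Then there exist δ > 0 and C > 0 such that for every k ∈ {1,2,3} and all nonnegative sequences ω⁽¹⁾, ω⁽²⁾, ω⁽³⁾ : ℤ → [0,∞): ( Σ_{n ∈ ℤ} ⟨n⟩^{2(s−1)} ( Σ_{(n₁,n₂,n₃) ∈ ℤ³ : n₁ − n₂ + n₃ = n, n₂ ≠ n₁, n₂ ≠ n₃} |n₂| ⟨φ⟩^{−(1−δ)} ω⁽¹⁾_{n₁} ω⁽²⁾_{n₂} ω⁽³⁾_{n₃} )² )^{1/2} ≤ C ‖ω⁽ᵏ⁾‖_{ℓ²_{s−1}} ∏_{l ∈ {1,2,3}, l ≠ k} ‖ω⁽ˡ⁾‖_{ℓ²_s}. -/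

import Mathlib

/-!
Write `N, p, m, q` for `⟨n⟩, ⟨n₁⟩, ⟨n₂⟩, ⟨n₃⟩` and `a, b` for `⟨n₂ - n₁⟩, ⟨n₂ - n₃⟩`. Off the
diagonals `⟨φ⟩ ≥ a b`. After moving all weights to one side, the symbol is dominated by
`(a⁻ʳ + p⁻ʳ) (b⁻ʳ + q⁻ʳ)` for some `r > 1/2`. This is square summable in `(n₁, n₃)`, uniformly in
`n₂`, and Cauchy–Schwarz in `(n₁, n₃)` for fixed `n` then gives the estimate.

When the negative weight falls on `n₁`, the pointwise domination combines Peetre's inequality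
`N^(s-1) b^(s-1) ≲ p^(s-1)` with `m^(1-s) ≤ q^(1-s) + b^(1-s)`; the case of `n₃` is symmetric. When
it falls on `n₂`, either `m ≲ p` or `m ≲ q`, which reduces to these two cases, or `a, b ≳ m` and the
phase absorbs everything. For `s > 1` the extra weight `N^(s-1)` is at most a constant times
`(p m q)^(s-1)`, so the case `s = 1` suffices.
-/

open scoped ENNReal NNReal

/-- `⟨x⟩ = (1+x²)^{1/2}`. -/
noncomputable def jbR (x : ℝ) : ℝ := Real.sqrt (1 + x ^ 2)

/-- The weighted `ℓ²_s(ℤ)` norm (valued in `[0,∞]`). -/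
noncomputable def l2sZ (s : ℝ) (ω : ℤ → ℝ≥0) : ℝ≥0∞ :=
  (∑' n : ℤ, ENNReal.ofReal (jbR (n : ℝ) ^ (2 * s)) * ((ω n : ℝ≥0∞)) ^ 2) ^ (1/2 : ℝ)

/-- The phase `φ = 2(n₂-n₁)(n₂-n₃)` of the cubic derivative NLS. -/
def phiDNLS (n₁ n₂ n₃ : ℤ) : ℤ := 2 * (n₂ - n₁) * (n₂ - n₃)

lemma one_le_jbR (x : ℝ) : 1 ≤ jbR x :=
  Real.one_le_sqrt.2 (by nlinarith [sq_nonneg x])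

lemma jbR_pos (x : ℝ) : 0 < jbR x := zero_lt_one.trans_le (one_le_jbR x)

lemma jbR_sq (x : ℝ) : jbR x ^ 2 = 1 + x ^ 2 := Real.sq_sqrt (by positivity)

lemma abs_le_jbR (x : ℝ) : |x| ≤ jbR x := Real.abs_le_sqrt (by linarith)

lemma jbR_neg (x : ℝ) : jbR (-x) = jbR x := by simp only [jbR, neg_sq]

lemma jbR_add_le (x y : ℝ) : jbR (x + y) ≤ jbR x + jbR y := by
  have cross_le : x * y ≤ jbR x * jbR y := by
    calc x * y ≤ |x| * |y| := (le_abs_self _).trans_eq (abs_mul x y)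
      _ ≤ jbR x * jbR y :=
        mul_le_mul (abs_le_jbR x) (abs_le_jbR y) (abs_nonneg y) (jbR_pos x).le
  refine Real.sqrt_le_iff.2 ⟨(add_pos (jbR_pos x) (jbR_pos y)).le, ?_⟩
  nlinarith [jbR_sq x, jbR_sq y]

lemma jbR_add_le_two_mul (x y : ℝ) : jbR (x + y) ≤ 2 * (jbR x * jbR y) := by
  nlinarith [jbR_add_le x y, one_le_jbR x, one_le_jbR y]

lemma jbR_mul_jbR_le {x y : ℝ} (hx : 1 ≤ |x|) (hy : 1 ≤ |y|) :
    jbR x * jbR y ≤ jbR (2 * x * y) := by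
  have hx' : 1 ≤ x ^ 2 := (one_le_sq_iff_one_le_abs x).2 hx
  have hy' : 1 ≤ y ^ 2 := (one_le_sq_iff_one_le_abs y).2 hy
  refine Real.le_sqrt_of_sq_le ?_
  rw [mul_pow, jbR_sq, jbR_sq]
  nlinarith [mul_nonneg (sub_nonneg.2 hx') (sub_nonneg.2 hy')]

lemma jbR_mul_jbR_le_jbR_phiDNLS {n₁ n₂ n₃ : ℤ} (h₁ : n₂ ≠ n₁) (h₃ : n₂ ≠ n₃) :
    jbR (n₂ - n₁) * jbR (n₂ - n₃) ≤ jbR (phiDNLS n₁ n₂ n₃ : ℤ) := by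
  have one_le_abs {k l : ℤ} (h : k ≠ l) : 1 ≤ |(k - l : ℝ)| := by
    exact_mod_cast Int.one_le_abs (sub_ne_zero.2 h)
  simpa only [phiDNLS, Int.cast_mul, Int.cast_sub, Int.cast_ofNat] using
    jbR_mul_jbR_le (one_le_abs h₁) (one_le_abs h₃)

lemma rpow_le_two_mul_rpow_of_nonpos {x y α : ℝ} (hx : 0 < x) (hxy : x ≤ 2 * y) (hα : -1 ≤ α)
    (hα₀ : α ≤ 0) : y ^ α ≤ 2 * x ^ α := by
  calc y ^ α ≤ (x / 2) ^ α := Real.rpow_le_rpow_of_nonpos (by positivity) (by linarith) hα₀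
    _ = 2 ^ (-α) * x ^ α := by
      rw [Real.div_rpow hx.le zero_le_two, Real.rpow_neg zero_le_two, div_eq_inv_mul]
    _ ≤ 2 ^ (1 : ℝ) * x ^ α := by gcongr <;> linarith
    _ = 2 * x ^ α := by rw [Real.rpow_one]

lemma jbR_rpow_mul_jbR_rpow_le {α : ℝ} (hα : -1 ≤ α) (hα₀ : α ≤ 0) (x y : ℝ) :
    jbR x ^ α * jbR y ^ α ≤ 2 * jbR (x + y) ^ α := by
  rw [← Real.mul_rpow (jbR_pos x).le (jbR_pos y).le]
  exact rpow_le_two_mul_rpow_of_nonpos (jbR_pos _) (jbR_add_le_two_mul x y) hα hα₀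

lemma jbR_rpow_sub_add_le {t : ℝ} (ht : 0 ≤ t) (x₁ x₂ x₃ : ℝ) :
    jbR (x₁ - x₂ + x₃) ^ t ≤ 4 ^ t * (jbR x₁ ^ t * jbR x₂ ^ t * jbR x₃ ^ t) := by
  have h₁ := jbR_pos x₁
  have h₂ := jbR_pos x₂
  have h₃ := jbR_pos x₃
  have triangle : jbR (x₁ - x₂ + x₃) ≤ 4 * (jbR x₁ * jbR x₂ * jbR x₃) := by
    calc jbR (x₁ - x₂ + x₃) ≤ 2 * (jbR (x₁ + -x₂) * jbR x₃) := jbR_add_le_two_mul _ _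
      _ ≤ 2 * (2 * (jbR x₁ * jbR (-x₂)) * jbR x₃) := by gcongr; exact jbR_add_le_two_mul _ _
      _ = 4 * (jbR x₁ * jbR x₂ * jbR x₃) := by rw [jbR_neg]; ring
  calc jbR (x₁ - x₂ + x₃) ^ t ≤ (4 * (jbR x₁ * jbR x₂ * jbR x₃)) ^ t :=
        Real.rpow_le_rpow (jbR_pos _).le triangle ht
    _ = 4 ^ t * (jbR x₁ ^ t * jbR x₂ ^ t * jbR x₃ ^ t) := by
      rw [Real.mul_rpow (by positivity) (by positivity),
        Real.mul_rpow (by positivity) (by positivity), Real.mul_rpow h₁.le h₂.le]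

/-- The factor of the majorant of the symbol attached to the pair `(n₂, n₁)`, or `(n₂, n₃)`: as a
function of `x` it peaks at `x = y` and at `x = 0`. -/
noncomputable def twoPeak (r y x : ℝ) : ℝ := jbR (y - x) ^ (-r) + jbR x ^ (-r)

lemma twoPeak_pos (r y x : ℝ) : 0 < twoPeak r y x :=
  add_pos (Real.rpow_pos_of_pos (jbR_pos _) _) (Real.rpow_pos_of_pos (jbR_pos _) _)

lemma jbR_sub_rpow_le_twoPeak (r y x : ℝ) : jbR (y - x) ^ (-r) ≤ twoPeak r y x :=
  le_add_of_nonneg_right (Real.rpow_nonneg (jbR_pos x).le _)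

lemma one_le_jbR_rpow_mul_jbR_rpow_neg {r s : ℝ} (hrs : r ≤ s) (x : ℝ) :
    1 ≤ jbR x ^ s * jbR x ^ (-r) := by
  rw [← Real.rpow_add (jbR_pos x)]
  exact Real.one_le_rpow (one_le_jbR x) (by linarith)

lemma one_le_jbR_rpow_mul_twoPeak {r s : ℝ} (hrs : r ≤ s) (y x : ℝ) :
    1 ≤ jbR x ^ s * twoPeak r y x :=
  (one_le_jbR_rpow_mul_jbR_rpow_neg hrs x).trans <|
    mul_le_mul_of_nonneg_left (le_add_of_nonneg_left (Real.rpow_nonneg (jbR_pos _).le _))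
      (Real.rpow_nonneg (jbR_pos x).le _)

lemma jbR_sub_rpow_mul_jbR_rpow_le {r s : ℝ} (hr : 1 / 2 ≤ r) (hrs : r ≤ s) (hs : s ≤ 1)
    (y x : ℝ) : jbR (y - x) ^ (-r) * jbR y ^ (1 - s) ≤ jbR x ^ s * twoPeak r y x := by
  have hb := jbR_pos (y - x)
  have hq := jbR_pos x
  have split : jbR y ^ (1 - s) ≤ jbR x ^ (1 - s) + jbR (y - x) ^ (1 - s) := by
    have triangle : jbR y ≤ jbR x + jbR (y - x) := by simpa using jbR_add_le x (y - x)
    exact (Real.rpow_le_rpow (jbR_pos y).le triangle (by linarith)).trans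
      (Real.rpow_add_le_add_rpow hq.le hb.le (by linarith) (by linarith))
  have far : jbR (y - x) ^ (-r) * jbR (y - x) ^ (1 - s) ≤ 1 := by
    rw [← Real.rpow_add hb]
    exact Real.rpow_le_one_of_one_le_of_nonpos (one_le_jbR _) (by linarith)
  have near : jbR x ^ (1 - s) ≤ jbR x ^ s :=
    Real.rpow_le_rpow_of_exponent_le (one_le_jbR x) (by linarith)
  calc jbR (y - x) ^ (-r) * jbR y ^ (1 - s)
      ≤ jbR (y - x) ^ (-r) * (jbR x ^ (1 - s) + jbR (y - x) ^ (1 - s)) := by gcongr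
    _ = jbR (y - x) ^ (-r) * jbR x ^ (1 - s) + jbR (y - x) ^ (-r) * jbR (y - x) ^ (1 - s) :=
        mul_add _ _ _
    _ ≤ jbR (y - x) ^ (-r) * jbR x ^ s + jbR x ^ s * jbR x ^ (-r) :=
        add_le_add (mul_le_mul_of_nonneg_left near (by positivity))
          (far.trans (one_le_jbR_rpow_mul_jbR_rpow_neg hrs x))
    _ = jbR x ^ s * twoPeak r y x := by rw [twoPeak]; ring

lemma rpow_sub_one_mul_rpow_le {x y : ℝ} (s : ℝ) (hx : 0 < x) (hy : 0 < y) (hxy : x ≤ 2 * y) :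
    y ^ (s - 1) * x ^ s ≤ 2 * (y ^ s * x ^ (s - 1)) := by
  rw [Real.rpow_sub_one hx.ne', Real.rpow_sub_one hy.ne']
  calc y ^ s / y * x ^ s = x * (y ^ s / y * (x ^ s / x)) := by field_simp
    _ ≤ 2 * y * (y ^ s / y * (x ^ s / x)) := by gcongr
    _ = 2 * (y ^ s * (x ^ s / x)) := by field_simp

/-- Domination of the symbol of the trilinear form at the frequencies `x₁, x₂, x₃`, with weight
exponents `α` on the output and `β₁, β₂, β₃` on the inputs, by a product of two `twoPeak` factors.
The phase enters only through its lower bound `⟨φ⟩ ≥ ⟨x₂ - x₁⟩ ⟨x₂ - x₃⟩`. -/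
def SymbolBoundAt (δ r C α β₁ β₂ β₃ x₁ x₂ x₃ : ℝ) : Prop :=
  jbR (x₁ - x₂ + x₃) ^ α * jbR x₂ * (jbR (x₂ - x₁) ^ (-(1 - δ)) * jbR (x₂ - x₃) ^ (-(1 - δ))) ≤
    C * (jbR x₁ ^ β₁ * jbR x₂ ^ β₂ * jbR x₃ ^ β₃) * (twoPeak r x₂ x₁ * twoPeak r x₂ x₃)

namespace SymbolBoundAt

variable {δ r s C α β₁ β₂ β₃ x₁ x₂ x₃ : ℝ}

lemma swap (h : SymbolBoundAt δ r C α β₁ β₂ β₃ x₁ x₂ x₃) :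
    SymbolBoundAt δ r C α β₃ β₂ β₁ x₃ x₂ x₁ := by
  rw [SymbolBoundAt] at h ⊢
  convert h using 1
  · rw [mul_comm (jbR (x₂ - x₃) ^ _), show x₃ - x₂ + x₁ = x₁ - x₂ + x₃ by ring]
  · ring

lemma mono {C' : ℝ} (h : SymbolBoundAt δ r C α β₁ β₂ β₃ x₁ x₂ x₃) (hC : C ≤ C') :
    SymbolBoundAt δ r C' α β₁ β₂ β₃ x₁ x₂ x₃ := by
  have := jbR_pos x₁
  have := jbR_pos x₂
  have := jbR_pos x₃
  have := twoPeak_pos r x₂ x₁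
  have := twoPeak_pos r x₂ x₃
  exact h.trans (by gcongr)

lemma shift {t : ℝ} (h : SymbolBoundAt δ r C α β₁ β₂ β₃ x₁ x₂ x₃) (ht : 0 ≤ t) :
    SymbolBoundAt δ r (4 ^ t * C) (α + t) (β₁ + t) (β₂ + t) (β₃ + t) x₁ x₂ x₃ := by
  have hN := jbR_pos (x₁ - x₂ + x₃)
  have hp := jbR_pos x₁
  have hm := jbR_pos x₂
  have hq := jbR_pos x₃
  have := jbR_pos (x₂ - x₁)
  have := jbR_pos (x₂ - x₃)
  have product := mul_le_mul (jbR_rpow_sub_add_le ht x₁ x₂ x₃) h (by positivity) (by positivity)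
  rw [SymbolBoundAt, Real.rpow_add hN, Real.rpow_add hp, Real.rpow_add hm, Real.rpow_add hq]
  linear_combination product

theorem of_neg_first (hr : 1 / 2 ≤ s - δ) (hδ : 0 ≤ δ) (hs : s ≤ 1) (x₁ x₂ x₃ : ℝ) :
    SymbolBoundAt δ (s - δ) 2 (s - 1) (s - 1) s s x₁ x₂ x₃ := by
  have := jbR_pos x₁
  have hm := jbR_pos x₂
  have hb := jbR_pos (x₂ - x₃)
  have := jbR_pos (x₂ - x₁)
  have := twoPeak_pos (s - δ) x₂ x₁
  have peetre :
      jbR (x₁ - x₂ + x₃) ^ (s - 1) * jbR (x₂ - x₃) ^ (s - 1) ≤ 2 * jbR x₁ ^ (s - 1) := by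
    convert jbR_rpow_mul_jbR_rpow_le (α := s - 1) (by linarith) (by linarith)
      (x₁ - x₂ + x₃) (x₂ - x₃) using 4
    ring
  have absorb := jbR_sub_rpow_mul_jbR_rpow_le hr (by linarith) hs x₂ x₃
  have near : jbR (x₂ - x₁) ^ (-(1 - δ)) ≤ twoPeak (s - δ) x₂ x₁ :=
    (Real.rpow_le_rpow_of_exponent_le (one_le_jbR _) (by linarith)).trans
      (jbR_sub_rpow_le_twoPeak _ _ _)
  have split_b :
      jbR (x₂ - x₃) ^ (-(1 - δ)) = jbR (x₂ - x₃) ^ (s - 1) * jbR (x₂ - x₃) ^ (-(s - δ)) := by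
    rw [← Real.rpow_add hb]; ring_nf
  have split_m : jbR x₂ = jbR x₂ ^ s * jbR x₂ ^ (1 - s) := by
    rw [← Real.rpow_add hm, add_sub_cancel, Real.rpow_one]
  calc jbR (x₁ - x₂ + x₃) ^ (s - 1) * jbR x₂ *
        (jbR (x₂ - x₁) ^ (-(1 - δ)) * jbR (x₂ - x₃) ^ (-(1 - δ)))
      = (jbR (x₁ - x₂ + x₃) ^ (s - 1) * jbR (x₂ - x₃) ^ (s - 1)) * jbR x₂ ^ s *
          jbR (x₂ - x₁) ^ (-(1 - δ)) * (jbR (x₂ - x₃) ^ (-(s - δ)) * jbR x₂ ^ (1 - s)) := by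
        rw [split_b]; nth_rw 1 [split_m]; ring
    _ ≤ (2 * jbR x₁ ^ (s - 1)) * jbR x₂ ^ s * twoPeak (s - δ) x₂ x₁ *
          (jbR x₃ ^ s * twoPeak (s - δ) x₂ x₃) := by gcongr
    _ = _ := by ring

lemma neg_second_of_neg_first (h : SymbolBoundAt δ r 2 (s - 1) (s - 1) s s x₁ x₂ x₃)
    (hx : jbR x₂ ≤ 2 * jbR x₁) : SymbolBoundAt δ r 4 (s - 1) s (s - 1) s x₁ x₂ x₃ := by
  have := jbR_pos x₃
  have := twoPeak_pos r x₂ x₁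
  have := twoPeak_pos r x₂ x₃
  have exchange := rpow_sub_one_mul_rpow_le s (jbR_pos x₂) (jbR_pos x₁) hx
  calc _ ≤ 2 * (jbR x₁ ^ (s - 1) * jbR x₂ ^ s * jbR x₃ ^ s) *
          (twoPeak r x₂ x₁ * twoPeak r x₂ x₃) := h
    _ ≤ 2 * (2 * (jbR x₁ ^ s * jbR x₂ ^ (s - 1)) * jbR x₃ ^ s) *
          (twoPeak r x₂ x₁ * twoPeak r x₂ x₃) := by gcongr
    _ = _ := by ring

lemma neg_second_of_two_mul_lt (hr : 1 / 2 ≤ s - δ) (hδ : 0 ≤ δ) (hs : s ≤ 1)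
    (h₁ : 2 * jbR x₁ < jbR x₂) (h₃ : 2 * jbR x₃ < jbR x₂) :
    SymbolBoundAt δ (s - δ) 4 (s - 1) s (s - 1) s x₁ x₂ x₃ := by
  have hm := jbR_pos x₂
  have := jbR_pos (x₂ - x₁)
  have := jbR_pos (x₂ - x₃)
  have output_le : jbR (x₁ - x₂ + x₃) ^ (s - 1) ≤ 1 :=
    Real.rpow_le_one_of_one_le_of_nonpos (one_le_jbR _) (by linarith)
  have far {x : ℝ} (hx : 2 * jbR x < jbR x₂) :
      jbR (x₂ - x) ^ (-(1 - δ)) ≤ 2 * jbR x₂ ^ (-(1 - δ)) := by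
    have triangle : jbR x₂ ≤ jbR x + jbR (x₂ - x) := by simpa using jbR_add_le x (x₂ - x)
    exact rpow_le_two_mul_rpow_of_nonpos hm (by linarith) (by linarith) (by linarith)
  have phase_absorbs : jbR x₂ * (jbR x₂ ^ (-(1 - δ)) * jbR x₂ ^ (-(1 - δ))) ≤ jbR x₂ ^ (s - 1) := by
    calc jbR x₂ * (jbR x₂ ^ (-(1 - δ)) * jbR x₂ ^ (-(1 - δ)))
        = jbR x₂ ^ (1 + (-(1 - δ) + -(1 - δ))) := by
          rw [Real.rpow_add hm, Real.rpow_add hm, Real.rpow_one]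
      _ ≤ jbR x₂ ^ (s - 1) := Real.rpow_le_rpow_of_exponent_le (one_le_jbR _) (by linarith)
  have one_le (x : ℝ) : 1 ≤ jbR x ^ s * twoPeak (s - δ) x₂ x :=
    one_le_jbR_rpow_mul_twoPeak (by linarith) x₂ x
  calc jbR (x₁ - x₂ + x₃) ^ (s - 1) * jbR x₂ *
        (jbR (x₂ - x₁) ^ (-(1 - δ)) * jbR (x₂ - x₃) ^ (-(1 - δ)))
      ≤ 1 * jbR x₂ * ((2 * jbR x₂ ^ (-(1 - δ))) * (2 * jbR x₂ ^ (-(1 - δ)))) := by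
        gcongr
        · exact far h₁
        · exact far h₃
    _ = 4 * (jbR x₂ * (jbR x₂ ^ (-(1 - δ)) * jbR x₂ ^ (-(1 - δ)))) := by ring
    _ ≤ 4 * jbR x₂ ^ (s - 1) := by gcongr
    _ ≤ 4 * jbR x₂ ^ (s - 1) *
          (jbR x₁ ^ s * twoPeak (s - δ) x₂ x₁ * (jbR x₃ ^ s * twoPeak (s - δ) x₂ x₃)) :=
        le_mul_of_one_le_right (by positivity)
          (one_le_mul_of_one_le_of_one_le (one_le x₁) (one_le x₃))
    _ = _ := by ring

theorem of_neg_second (hr : 1 / 2 ≤ s - δ) (hδ : 0 ≤ δ) (hs : s ≤ 1) (x₁ x₂ x₃ : ℝ) :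
    SymbolBoundAt δ (s - δ) 4 (s - 1) s (s - 1) s x₁ x₂ x₃ := by
  rcases le_or_gt (jbR x₂) (2 * jbR x₁) with near₁ | far₁
  · exact (of_neg_first hr hδ hs x₁ x₂ x₃).neg_second_of_neg_first near₁
  rcases le_or_gt (jbR x₂) (2 * jbR x₃) with near₃ | far₃
  · exact ((of_neg_first hr hδ hs x₃ x₂ x₁).neg_second_of_neg_first near₃).swap
  · exact neg_second_of_two_mul_lt hr hδ hs far₁ far₃

end SymbolBoundAt

lemma summable_jbR_rpow {r : ℝ} (hr : 1 < r) : Summable fun n : ℤ => jbR n ^ (-r) := by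
  refine Summable.of_norm_bounded_eventually (Real.summable_abs_int_rpow hr) ?_
  filter_upwards [(Set.finite_singleton (0 : ℤ)).compl_mem_cofinite] with n hn
  have hn : n ≠ 0 := hn
  rw [Real.norm_of_nonneg (Real.rpow_nonneg (jbR_pos n).le _)]
  exact Real.rpow_le_rpow_of_nonpos (by positivity) (abs_le_jbR n) (by linarith)

lemma twoPeak_sq_le (r y x : ℝ) :
    twoPeak r y x ^ 2 ≤ 2 * (jbR (y - x) ^ (-(2 * r)) + jbR x ^ (-(2 * r))) := by
  have rpow_two_mul (z : ℝ) : jbR z ^ (-(2 * r)) = (jbR z ^ (-r)) ^ 2 := by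
    rw [← Real.rpow_mul_natCast (jbR_pos z).le]; ring_nf
  rw [rpow_two_mul, rpow_two_mul]
  exact add_sq_le

theorem exists_tsum_twoPeak_sq_le {r : ℝ} (hr : 1 / 2 < r) :
    ∃ A : ℝ, 0 < A ∧
      ∀ y : ℤ, ∑' x : ℤ, ENNReal.ofReal (twoPeak r y x) ^ 2 ≤ ENNReal.ofReal A := by
  set f : ℤ → ℝ := fun n => jbR n ^ (-(2 * r)) with hf
  have f_pos (n : ℤ) : 0 < f n := Real.rpow_pos_of_pos (jbR_pos n) _
  have f_summable : Summable f := summable_jbR_rpow (by linarith)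
  have f_translate (y : ℤ) : Summable fun x => f (y - x) :=
    (Equiv.subLeft y).summable_iff.2 f_summable
  have tsum_translate (y : ℤ) : ∑' x, f (y - x) = ∑' n, f n := (Equiv.subLeft y).tsum_eq f
  refine ⟨2 * (∑' n, f n + ∑' n, f n), ?_, fun y => ?_⟩
  · have := f_summable.tsum_pos (fun n => (f_pos n).le) 0 (f_pos 0)
    positivity
  calc ∑' x : ℤ, ENNReal.ofReal (twoPeak r y x) ^ 2
      ≤ ∑' x : ℤ, ENNReal.ofReal (2 * (f (y - x) + f x)) := by
        refine ENNReal.tsum_le_tsum fun x => ?_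
        rw [← ENNReal.ofReal_pow (twoPeak_pos r y x).le]
        simpa only [hf, Int.cast_sub] using ENNReal.ofReal_le_ofReal (twoPeak_sq_le r y x)
    _ = ENNReal.ofReal (2 * (∑' n, f n + ∑' n, f n)) := by
        rw [← ENNReal.ofReal_tsum_of_nonneg
            (fun x => mul_nonneg zero_le_two (add_pos (f_pos _) (f_pos _)).le)
            (((f_translate y).add f_summable).mul_left 2),
          tsum_mul_left, (f_translate y).tsum_add f_summable, tsum_translate]

lemma sq_tsum_mul_le_tsum_sq_mul_tsum_sq {ι : Type*} (f g : ι → ℝ≥0∞) :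
    (∑' i, f i * g i) ^ 2 ≤ (∑' i, f i ^ 2) * ∑' i, g i ^ 2 := by
  let _ : MeasurableSpace ι := ⊤
  have holder := ENNReal.lintegral_mul_le_Lp_mul_Lq MeasureTheory.Measure.count
    Real.HolderConjugate.two_two (f := f) (g := g)
    measurable_from_top.aemeasurable measurable_from_top.aemeasurable
  simp only [MeasureTheory.lintegral_count, Pi.mul_apply, ENNReal.rpow_ofNat] at holder
  have sq_sqrt (x : ℝ≥0∞) : (x ^ (1 / 2 : ℝ)) ^ 2 = x := by
    rw [← ENNReal.rpow_mul_natCast]; norm_num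
  simpa only [mul_pow, sq_sqrt] using pow_le_pow_left' holder 2

theorem tsum_sq_trilinear_le {G : Type*} [AddCommGroup G] {K : G → G → G → ℝ≥0∞} {B : ℝ≥0∞}
    (hK : ∀ y, ∑' x : G × G, K x.1 y x.2 ^ 2 ≤ B ^ 2) (f₁ f₂ f₃ : G → ℝ≥0∞) :
    ∑' n, (∑' x : G × G,
        K x.1 (x.1 + x.2 - n) x.2 * (f₁ x.1 * f₂ (x.1 + x.2 - n) * f₃ x.2)) ^ 2 ≤
      B ^ 2 * ((∑' y, f₁ y ^ 2) * (∑' y, f₂ y ^ 2) * ∑' y, f₃ y ^ 2) := by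
  have cauchy_schwarz (n : G) :
      (∑' x : G × G, K x.1 (x.1 + x.2 - n) x.2 * (f₁ x.1 * f₂ (x.1 + x.2 - n) * f₃ x.2)) ^ 2 ≤
        ((∑' y, f₁ y ^ 2) * ∑' y, f₃ y ^ 2) *
          ∑' x : G × G, (K x.1 (x.1 + x.2 - n) x.2 * f₂ (x.1 + x.2 - n)) ^ 2 := by
    convert sq_tsum_mul_le_tsum_sq_mul_tsum_sq (fun x : G × G => f₁ x.1 * f₃ x.2)
      (fun x : G × G => K x.1 (x.1 + x.2 - n) x.2 * f₂ (x.1 + x.2 - n)) using 2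
    · exact tsum_congr fun x => by ring
    · simp only [mul_pow, ENNReal.tsum_prod', ENNReal.tsum_mul_left, ENNReal.tsum_mul_right]
  have middle : ∑' n, ∑' x : G × G, (K x.1 (x.1 + x.2 - n) x.2 * f₂ (x.1 + x.2 - n)) ^ 2 ≤
      B ^ 2 * ∑' y, f₂ y ^ 2 := by
    calc ∑' n, ∑' x : G × G, (K x.1 (x.1 + x.2 - n) x.2 * f₂ (x.1 + x.2 - n)) ^ 2
        = ∑' x : G × G, ∑' y, (K x.1 y x.2 * f₂ y) ^ 2 := by
          rw [ENNReal.tsum_comm]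
          exact tsum_congr fun x =>
            (Equiv.subLeft (x.1 + x.2)).tsum_eq fun y => (K x.1 y x.2 * f₂ y) ^ 2
      _ = ∑' y, (∑' x : G × G, K x.1 y x.2 ^ 2) * f₂ y ^ 2 := by
          rw [ENNReal.tsum_comm]
          simp only [mul_pow, ENNReal.tsum_mul_right]
      _ ≤ ∑' y, B ^ 2 * f₂ y ^ 2 := ENNReal.tsum_le_tsum fun y => by gcongr; exact hK y
      _ = B ^ 2 * ∑' y, f₂ y ^ 2 := ENNReal.tsum_mul_left
  calc _ ≤ ∑' n, ((∑' y, f₁ y ^ 2) * ∑' y, f₃ y ^ 2) *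
          ∑' x : G × G, (K x.1 (x.1 + x.2 - n) x.2 * f₂ (x.1 + x.2 - n)) ^ 2 :=
        ENNReal.tsum_le_tsum cauchy_schwarz
    _ = ((∑' y, f₁ y ^ 2) * ∑' y, f₃ y ^ 2) *
          ∑' n, ∑' x : G × G, (K x.1 (x.1 + x.2 - n) x.2 * f₂ (x.1 + x.2 - n)) ^ 2 :=
        ENNReal.tsum_mul_left
    _ ≤ ((∑' y, f₁ y ^ 2) * ∑' y, f₃ y ^ 2) * (B ^ 2 * ∑' y, f₂ y ^ 2) := by gcongr
    _ = _ := by ring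

/-- The weight `⟨n⟩ˢ`, as an extended nonnegative number. -/
noncomputable def jbWeight (s : ℝ) (n : ℤ) : ℝ≥0∞ := ENNReal.ofReal (jbR n ^ s)

/-- The `ℓ²_s(ℤ)` norm of an extended nonnegative sequence; `l2sZ` is its restriction to finite
sequences. -/
noncomputable def weightedL2 (s : ℝ) (F : ℤ → ℝ≥0∞) : ℝ≥0∞ :=
  (∑' n : ℤ, ENNReal.ofReal (jbR n ^ (2 * s)) * F n ^ 2) ^ (1 / 2 : ℝ)

/-- The trilinear form with multiplier `|n₂| ⟨φ⟩^{-(1-δ)}`, summed over the nonresonant triples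
with `n₁ - n₂ + n₃ = n`. -/
noncomputable def dnlsForm (δ : ℝ) (ω₁ ω₂ ω₃ : ℤ → ℝ≥0∞) (n : ℤ) : ℝ≥0∞ :=
  ∑' p : {q : ℤ × ℤ × ℤ // q.1 - q.2.1 + q.2.2 = n ∧ q.2.1 ≠ q.1 ∧ q.2.1 ≠ q.2.2},
    ENNReal.ofReal ((|p.1.2.1| : ℝ) * jbR (phiDNLS p.1.1 p.1.2.1 p.1.2.2 : ℤ) ^ (-(1 - δ))) *
      ω₁ p.1.1 * ω₂ p.1.2.1 * ω₃ p.1.2.2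

lemma weightedL2_sq (s : ℝ) (F : ℤ → ℝ≥0∞) :
    weightedL2 s F ^ 2 = ∑' n, (jbWeight s n * F n) ^ 2 := by
  have weight_sq (n : ℤ) : ENNReal.ofReal (jbR n ^ (2 * s)) = jbWeight s n ^ 2 := by
    rw [jbWeight, ← ENNReal.ofReal_pow (Real.rpow_nonneg (jbR_pos n).le _),
      ← Real.rpow_mul_natCast (jbR_pos n).le]
    ring_nf
  rw [weightedL2, ← ENNReal.rpow_mul_natCast]
  norm_num [weight_sq, mul_pow]

section SymbolEstimate

variable {δ r C A α β₁ β₂ β₃ : ℝ}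

lemma SymbolBoundAt.jbWeight_mul_le {n₁ n₂ n₃ : ℤ}
    (h : SymbolBoundAt δ r C α β₁ β₂ β₃ n₁ n₂ n₃) (hδ : δ ≤ 1) (hC : 0 ≤ C)
    (h₁ : n₂ ≠ n₁) (h₃ : n₂ ≠ n₃) :
    jbWeight α (n₁ - n₂ + n₃) *
        ENNReal.ofReal (|(n₂ : ℝ)| * jbR (phiDNLS n₁ n₂ n₃ : ℤ) ^ (-(1 - δ))) ≤
      ENNReal.ofReal (C * (twoPeak r n₂ n₁ * twoPeak r n₂ n₃)) *
        (jbWeight β₁ n₁ * jbWeight β₂ n₂ * jbWeight β₃ n₃) := by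
  have hN := jbR_pos (n₁ - n₂ + n₃)
  have hp := jbR_pos n₁
  have hm := jbR_pos n₂
  have ha := jbR_pos (n₂ - n₁)
  have hb := jbR_pos (n₂ - n₃)
  have hφ := jbR_pos (phiDNLS n₁ n₂ n₃ : ℤ)
  have := twoPeak_pos r n₂ n₁
  have := twoPeak_pos r n₂ n₃
  have phase_le : jbR (phiDNLS n₁ n₂ n₃ : ℤ) ^ (-(1 - δ)) ≤
      jbR (n₂ - n₁) ^ (-(1 - δ)) * jbR (n₂ - n₃) ^ (-(1 - δ)) := by
    rw [← Real.mul_rpow ha.le hb.le]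
    exact Real.rpow_le_rpow_of_nonpos (by positivity) (jbR_mul_jbR_le_jbR_phiDNLS h₁ h₃)
      (by linarith)
  simp only [jbWeight]
  push_cast
  rw [← ENNReal.ofReal_mul (by positivity), ← ENNReal.ofReal_mul (by positivity),
    ← ENNReal.ofReal_mul (by positivity), ← ENNReal.ofReal_mul (by positivity)]
  refine ENNReal.ofReal_le_ofReal ?_
  calc jbR (n₁ - n₂ + n₃) ^ α * (|(n₂ : ℝ)| * jbR (phiDNLS n₁ n₂ n₃ : ℤ) ^ (-(1 - δ)))
      ≤ jbR (n₁ - n₂ + n₃) ^ α *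
          (jbR n₂ * (jbR (n₂ - n₁) ^ (-(1 - δ)) * jbR (n₂ - n₃) ^ (-(1 - δ)))) := by
        gcongr; exact abs_le_jbR _
    _ ≤ C * (jbR n₁ ^ β₁ * jbR n₂ ^ β₂ * jbR n₃ ^ β₃) *
          (twoPeak r n₂ n₁ * twoPeak r n₂ n₃) := by
        rw [← mul_assoc]; exact h
    _ = _ := by ring

lemma jbWeight_mul_dnlsForm_le (h : ∀ n₁ n₂ n₃ : ℤ, SymbolBoundAt δ r C α β₁ β₂ β₃ n₁ n₂ n₃)
    (hδ : δ ≤ 1) (hC : 0 ≤ C) (ω₁ ω₂ ω₃ : ℤ → ℝ≥0∞) (n : ℤ) :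
    jbWeight α n * dnlsForm δ ω₁ ω₂ ω₃ n ≤
      ∑' x : ℤ × ℤ,
        ENNReal.ofReal (C * (twoPeak r (x.1 + x.2 - n : ℤ) x.1 *
            twoPeak r (x.1 + x.2 - n : ℤ) x.2)) *
          (jbWeight β₁ x.1 * ω₁ x.1 *
            (jbWeight β₂ (x.1 + x.2 - n) * ω₂ (x.1 + x.2 - n)) *
            (jbWeight β₃ x.2 * ω₃ x.2)) := by
  have injective_outer : Function.Injective
      fun p : {q : ℤ × ℤ × ℤ // q.1 - q.2.1 + q.2.2 = n ∧ q.2.1 ≠ q.1 ∧ q.2.1 ≠ q.2.2} =>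
        (p.1.1, p.1.2.2) := by
    rintro ⟨⟨n₁, n₂, n₃⟩, hn, _⟩ ⟨⟨k₁, k₂, k₃⟩, hk, _⟩ h_eq
    simp only [Prod.mk.injEq, Subtype.mk.injEq] at h_eq hn hk ⊢
    omega
  rw [dnlsForm, ← ENNReal.tsum_mul_left]
  refine le_trans (ENNReal.tsum_le_tsum ?_)
    (ENNReal.tsum_comp_le_tsum_of_injective injective_outer _)
  rintro ⟨⟨n₁, n₂, n₃⟩, hn, h₁, h₃⟩
  dsimp only at hn h₁ h₃ ⊢
  obtain rfl : n₂ = n₁ + n₃ - n := by omega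
  have symbol_le := (h n₁ _ n₃).jbWeight_mul_le hδ hC h₁ h₃
  rw [hn] at symbol_le
  calc _ = jbWeight α n * ENNReal.ofReal (|((n₁ + n₃ - n : ℤ) : ℝ)| *
            jbR (phiDNLS n₁ (n₁ + n₃ - n) n₃ : ℤ) ^ (-(1 - δ))) *
          (ω₁ n₁ * ω₂ (n₁ + n₃ - n) * ω₃ n₃) := by ring
    _ ≤ _ := mul_le_mul_left symbol_le _
    _ = _ := by ring

lemma tsum_majorant_sq_le (hA : ∀ y : ℤ, ∑' x : ℤ, ENNReal.ofReal (twoPeak r y x) ^ 2 ≤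
      ENNReal.ofReal A) (hC : 0 ≤ C) (y : ℤ) :
    ∑' x : ℤ × ℤ, ENNReal.ofReal (C * (twoPeak r y x.1 * twoPeak r y x.2)) ^ 2 ≤
      (ENNReal.ofReal C * ENNReal.ofReal A) ^ 2 := by
  simp only [ENNReal.ofReal_mul hC, ENNReal.ofReal_mul (twoPeak_pos r y _).le, mul_pow,
    ENNReal.tsum_prod', ENNReal.tsum_mul_left, ENNReal.tsum_mul_right]
  rw [sq (ENNReal.ofReal A)]
  gcongr <;> exact hA y

theorem weightedL2_dnlsForm_le (h : ∀ n₁ n₂ n₃ : ℤ, SymbolBoundAt δ r C α β₁ β₂ β₃ n₁ n₂ n₃)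
    (hδ : δ ≤ 1) (hC : 0 ≤ C)
    (hA : ∀ y : ℤ, ∑' x : ℤ, ENNReal.ofReal (twoPeak r y x) ^ 2 ≤ ENNReal.ofReal A)
    (ω₁ ω₂ ω₃ : ℤ → ℝ≥0∞) :
    weightedL2 α (dnlsForm δ ω₁ ω₂ ω₃) ≤
      ENNReal.ofReal (C * A) * (weightedL2 β₁ ω₁ * weightedL2 β₂ ω₂ * weightedL2 β₃ ω₃) := by
  rw [← (ENNReal.pow_right_strictMono two_ne_zero).le_iff_le, ENNReal.ofReal_mul hC]
  simp only [mul_pow _ (_ * _ : ℝ≥0∞), mul_pow (weightedL2 _ _), mul_pow (_ * _) (weightedL2 _ _),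
    weightedL2_sq]
  refine (ENNReal.tsum_le_tsum fun n => ?_).trans <| tsum_sq_trilinear_le
    (K := fun n₁ n₂ n₃ : ℤ => ENNReal.ofReal (C * (twoPeak r n₂ n₁ * twoPeak r n₂ n₃)))
    (tsum_majorant_sq_le hA hC) (fun n => jbWeight β₁ n * ω₁ n) (fun n => jbWeight β₂ n * ω₂ n)
    (fun n => jbWeight β₃ n * ω₃ n)
  exact pow_le_pow_left' (jbWeight_mul_dnlsForm_le h hδ hC ω₁ ω₂ ω₃ n) 2

end SymbolEstimate

theorem DNLS_A2_general {s δ : ℝ} (hδ₀ : 0 ≤ δ) (hδ : δ < min s 1 - 1 / 2) :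
    ∃ C : ℝ, 0 < C ∧ ∀ ω₁ ω₂ ω₃ : ℤ → ℝ≥0∞,
      weightedL2 (s - 1) (dnlsForm δ ω₁ ω₂ ω₃) ≤
          ENNReal.ofReal C * (weightedL2 (s - 1) ω₁ * weightedL2 s ω₂ * weightedL2 s ω₃) ∧
        weightedL2 (s - 1) (dnlsForm δ ω₁ ω₂ ω₃) ≤
          ENNReal.ofReal C * (weightedL2 s ω₁ * weightedL2 (s - 1) ω₂ * weightedL2 s ω₃) ∧
        weightedL2 (s - 1) (dnlsForm δ ω₁ ω₂ ω₃) ≤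
          ENNReal.ofReal C * (weightedL2 s ω₁ * weightedL2 s ω₂ * weightedL2 (s - 1) ω₃) := by
  set σ := min s 1
  have hσ : σ ≤ 1 := min_le_right s 1
  have hσs : 0 ≤ s - σ := sub_nonneg.2 (min_le_left s 1)
  obtain ⟨A, hA₀, hA⟩ := exists_tsum_twoPeak_sq_le (r := σ - δ) (by linarith)
  have bound {β₁ β₂ β₃ : ℝ}
      (h : ∀ n₁ n₂ n₃ : ℤ, SymbolBoundAt δ (σ - δ) 4 (σ - 1) β₁ β₂ β₃ n₁ n₂ n₃) :=
    weightedL2_dnlsForm_le (fun n₁ n₂ n₃ => (h n₁ n₂ n₃).shift hσs) (by linarith) (by positivity) hA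
  have first (x₁ x₂ x₃ : ℝ) : SymbolBoundAt δ (σ - δ) 4 (σ - 1) (σ - 1) σ σ x₁ x₂ x₃ :=
    (SymbolBoundAt.of_neg_first (by linarith) hδ₀ hσ _ _ _).mono (by norm_num)
  have second (x₁ x₂ x₃ : ℝ) : SymbolBoundAt δ (σ - δ) 4 (σ - 1) σ (σ - 1) σ x₁ x₂ x₃ :=
    .of_neg_second (by linarith) hδ₀ hσ _ _ _
  have shift_self : σ + (s - σ) = s := by ring
  have shift_sub_one : σ - 1 + (s - σ) = s - 1 := by ring
  refine ⟨4 ^ (s - σ) * 4 * A, by positivity, fun ω₁ ω₂ ω₃ => ⟨?_, ?_, ?_⟩⟩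
  · simpa only [shift_self, shift_sub_one] using bound (fun _ _ _ => first _ _ _) ω₁ ω₂ ω₃
  · simpa only [shift_self, shift_sub_one] using bound (fun _ _ _ => second _ _ _) ω₁ ω₂ ω₃
  · simpa only [shift_self, shift_sub_one] using bound (fun _ _ _ => (first _ _ _).swap) ω₁ ω₂ ω₃

/-- The estimate (A2) for the gauged derivative NLS: for `1/2 < s < 1`
there are `δ > 0`, `C > 0` such that for each `k ∈ {1,2,3}` the trilinear form with
multiplier `|n₂| ⟨φ⟩^{-(1-δ)}` is bounded in `ℓ²_{s-1}` by
`C ‖ω⁽ᵏ⁾‖_{ℓ²_{s-1}} ∏_{l≠k} ‖ω⁽ˡ⁾‖_{ℓ²_s}`. -/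
theorem DNLS_A2 (s : ℝ) (hs : 1/2 < s) (hs' : s < 1) :
    ∃ δ C : ℝ, 0 < δ ∧ 0 < C ∧
      ∀ (ω₁ ω₂ ω₃ : ℤ → ℝ≥0),
        ((∑' n : ℤ, ENNReal.ofReal (jbR (n : ℝ) ^ (2 * (s - 1))) *
            (∑' p : {q : ℤ × ℤ × ℤ //
                q.1 - q.2.1 + q.2.2 = n ∧ q.2.1 ≠ q.1 ∧ q.2.1 ≠ q.2.2},
              ENNReal.ofReal ((|p.1.2.1| : ℝ) *
                  jbR ((phiDNLS p.1.1 p.1.2.1 p.1.2.2 : ℤ) : ℝ) ^ (-(1 - δ))) *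
                (ω₁ p.1.1 : ℝ≥0∞) * (ω₂ p.1.2.1 : ℝ≥0∞) * (ω₃ p.1.2.2 : ℝ≥0∞)) ^ 2) ^ (1/2 : ℝ)
          ≤ ENNReal.ofReal C * (l2sZ (s - 1) ω₁ * l2sZ s ω₂ * l2sZ s ω₃)) ∧
        ((∑' n : ℤ, ENNReal.ofReal (jbR (n : ℝ) ^ (2 * (s - 1))) *
            (∑' p : {q : ℤ × ℤ × ℤ //
                q.1 - q.2.1 + q.2.2 = n ∧ q.2.1 ≠ q.1 ∧ q.2.1 ≠ q.2.2},
              ENNReal.ofReal ((|p.1.2.1| : ℝ) *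
                  jbR ((phiDNLS p.1.1 p.1.2.1 p.1.2.2 : ℤ) : ℝ) ^ (-(1 - δ))) *
                (ω₁ p.1.1 : ℝ≥0∞) * (ω₂ p.1.2.1 : ℝ≥0∞) * (ω₃ p.1.2.2 : ℝ≥0∞)) ^ 2) ^ (1/2 : ℝ)
          ≤ ENNReal.ofReal C * (l2sZ s ω₁ * l2sZ (s - 1) ω₂ * l2sZ s ω₃)) ∧
        ((∑' n : ℤ, ENNReal.ofReal (jbR (n : ℝ) ^ (2 * (s - 1))) *
            (∑' p : {q : ℤ × ℤ × ℤ //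
                q.1 - q.2.1 + q.2.2 = n ∧ q.2.1 ≠ q.1 ∧ q.2.1 ≠ q.2.2},
              ENNReal.ofReal ((|p.1.2.1| : ℝ) *
                  jbR ((phiDNLS p.1.1 p.1.2.1 p.1.2.2 : ℤ) : ℝ) ^ (-(1 - δ))) *
                (ω₁ p.1.1 : ℝ≥0∞) * (ω₂ p.1.2.1 : ℝ≥0∞) * (ω₃ p.1.2.2 : ℝ≥0∞)) ^ 2) ^ (1/2 : ℝ)
          ≤ ENNReal.ofReal C * (l2sZ s ω₁ * l2sZ s ω₂ * l2sZ (s - 1) ω₃)) := by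
  obtain ⟨C, hC, bound⟩ := DNLS_A2_general (s := s) (δ := (s - 1 / 2) / 2) (by linarith)
    (by rw [min_eq_left hs'.le]; linarith)
  exact ⟨(s - 1 / 2) / 2, C, by linarith, hC, fun ω₁ ω₂ ω₃ => bound (ω₁ ·) (ω₂ ·) (ω₃ ·)⟩
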